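/- The valuation of x_2 is v_2(x_2) = min{−(p^2−p+1)b_1, −p·b_1 − p^2·m} = −(p−1)·b_1 − b_2. -/

import Mathlib

/-- A normalized discrete valuation on a field `K`, recorded as a function
`v : K → ℤ`.  The value of `v` at `0` is irrelevant: all conditions below only
refer to nonzero elements (the convention `v 0 = ∞` being understood). -/
structure IsDiscVal {K : Type*} [Field K] (v : K → ℤ) : Prop where
  map_one : v 1 = 0
  map_mul : ∀ x y : K, x ≠ 0 → y ≠ 0 → v (x * y) = v x + v y
  min_le_add : ∀ x y : K, x ≠ 0 → y ≠ 0 → x + y ≠ 0 → min (v x) (v y) ≤ v (x + y)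
  exists_uniformizer : ∃ π : K, π ≠ 0 ∧ v π = 1

namespace IsDiscVal

variable {K : Type*} [Field K] {v : K → ℤ}

lemma map_neg_one (hv : IsDiscVal v) : v (-1) = 0 := by
  have h := hv.map_mul (-1) (-1) (by simp) (by simp)
  rw [neg_one_mul, neg_neg, hv.map_one] at h
  omega

lemma map_neg (hv : IsDiscVal v) (x : K) : v (-x) = v x := by
  by_cases hx : x = 0
  · simp [hx]
  · rw [← neg_one_mul, hv.map_mul _ _ (by simp) hx, hv.map_neg_one, zero_add]

lemma map_pow (hv : IsDiscVal v) {x : K} (hx : x ≠ 0) (n : ℕ) : v (x ^ n) = n * v x := by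
  induction n with
  | zero => simp [hv.map_one]
  | succ n ih =>
    rw [pow_succ, hv.map_mul _ _ (pow_ne_zero n hx) hx, ih]
    push_cast
    ring

/-- `LowerBound v c x` says `c ≤ v x`, with the convention `v 0 = ∞`. -/
def LowerBound (v : K → ℤ) (c : ℤ) (x : K) : Prop := x ≠ 0 → c ≤ v x

lemma LowerBound.mono {c d : ℤ} {x : K} (h : LowerBound v c x) (hd : d ≤ c) :
    LowerBound v d x := fun hx => hd.trans (h hx)

lemma LowerBound.neg (hv : IsDiscVal v) {c : ℤ} {x : K} (h : LowerBound v c x) :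
    LowerBound v c (-x) := fun hx => by
  rw [hv.map_neg]
  exact h (neg_ne_zero.mp hx)

lemma LowerBound.add (hv : IsDiscVal v) {c : ℤ} {x y : K} (hx : LowerBound v c x)
    (hy : LowerBound v c y) : LowerBound v c (x + y) := fun hxy => by
  by_cases hx0 : x = 0
  · subst hx0
    rw [zero_add] at hxy ⊢
    exact hy hxy
  by_cases hy0 : y = 0
  · subst hy0
    rw [add_zero]
    exact hx hx0
  exact (le_min (hx hx0) (hy hy0)).trans (hv.min_le_add x y hx0 hy0 hxy)

lemma LowerBound.mul (hv : IsDiscVal v) {c d : ℤ} {x y : K} (hx : LowerBound v c x)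
    (hy : LowerBound v d y) : LowerBound v (c + d) (x * y) := fun hxy => by
  have hx0 := left_ne_zero_of_mul hxy
  have hy0 := right_ne_zero_of_mul hxy
  rw [hv.map_mul x y hx0 hy0]
  exact add_le_add (hx hx0) (hy hy0)

lemma lowerBound_natCast (hv : IsDiscVal v) (n : ℕ) : LowerBound v 0 (n : K) := by
  induction n with
  | zero => simp [LowerBound]
  | succ n ih =>
    rw [Nat.cast_succ]
    exact ih.add hv fun _ => hv.map_one.ge

lemma lowerBound_sum (hv : IsDiscVal v) {ι : Type*} (s : Finset ι) (f : ι → K) {c : ℤ}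
    (h : ∀ i ∈ s, LowerBound v c (f i)) : LowerBound v c (∑ i ∈ s, f i) :=
  Finset.sum_induction f (LowerBound v c) (fun _ _ hx hy => hx.add hv hy)
    (fun h0 => absurd rfl h0) h

lemma add_ne_zero_and_map_add (hv : IsDiscVal v) {x y : K} (hx : x ≠ 0)
    (hy : LowerBound v (v x + 1) y) : x + y ≠ 0 ∧ v (x + y) = v x := by
  by_cases hy0 : y = 0
  · simp [hy0, hx]
  have hlt := hy hy0
  have hxy : x + y ≠ 0 := fun h => by
    rw [eq_neg_of_add_eq_zero_right h, hv.map_neg] at hlt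
    omega
  refine ⟨hxy, ?_⟩
  have hle := hv.min_le_add x y hx hy0 hxy
  have hge := hv.min_le_add (x + y) (-y) hxy (neg_ne_zero.mpr hy0) (by simpa using hx)
  rw [add_neg_cancel_right, hv.map_neg] at hge
  omega

/-- A root of an Artin–Schreier equation `x ^ p - x = a` with `v a < 0` has valuation `v a / p`. -/
lemma ne_zero_and_mul_map_of_pow_sub_self (hv : IsDiscVal v) {p : ℕ} (hp : 2 ≤ p) {x a : K}
    (ha : a ≠ 0) (hva : v a < 0) (h : x ^ p - x = a) : x ≠ 0 ∧ (p : ℤ) * v x = v a := by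
  have hx : x ≠ 0 := by
    rintro rfl
    rw [zero_pow (by omega), sub_zero] at h
    exact ha h.symm
  have hp' : (2 : ℤ) ≤ p := by exact_mod_cast hp
  have hneg : v x < 0 := by
    by_contra! hnn
    have hb : LowerBound v 0 (x ^ p + -x) :=
      LowerBound.add hv (fun _ => by rw [hv.map_pow hx]; positivity)
        (LowerBound.neg hv fun _ => hnn)
    rw [← sub_eq_add_neg, h] at hb
    exact absurd (hb ha) (by omega)
  have hlt : (p : ℤ) * v x + 1 ≤ v x := by nlinarith
  have hb : LowerBound v (v (x ^ p) + 1) (-x) :=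
    LowerBound.neg hv fun _ => by rwa [hv.map_pow hx]
  have hval := (hv.add_ne_zero_and_map_add (pow_ne_zero p hx) hb).2
  rw [← sub_eq_add_neg, h, hv.map_pow hx] at hval
  exact ⟨hx, hval.symm⟩

end IsDiscVal

/-- The Witt addition polynomial `(X ^ p + Y ^ p - (X + Y) ^ p) / p` in integral form. -/
lemma witt_div_eq_neg_sum {K : Type*} [Field K] [CharZero K] {p : ℕ} (hp : p.Prime) (x y : K) :
    (x ^ p + y ^ p - (x + y) ^ p) / (p : K) =
      -∑ k ∈ Finset.Ioo 0 p, x ^ k * y ^ (p - k) * ((p.choose k / p : ℕ) : K) := by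
  have hp0 : (p : K) ≠ 0 := Nat.cast_ne_zero.mpr hp.ne_zero
  rw [add_pow_prime_eq' hp, div_eq_iff hp0]
  ring

/-- `v₂(x₂) = min{−(p²−p+1)b₁, −p·b₁−p²·m} = −(p−1)·b₁ − b₂`. -/
theorem statement4
    (p : ℕ) (hp : p.Prime)
    (K0 K2 : Type*) [Field K0] [Field K2] [CharZero K0] [CharZero K2]
    [Algebra K0 K2] [IsGalois K0 K2] [FiniteDimensional K0 K2]
    (hdeg : Module.finrank K0 K2 = p ^ 2)
    (hcyc : IsCyclic (K2 ≃ₐ[K0] K2))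
    (v0 : K0 → ℤ) (v2 : K2 → ℤ)
    (hv0 : IsDiscVal v0) (hv2 : IsDiscVal v2)
    (e0 : ℤ) (he0 : e0 = v0 (p : K0)) (he0pos : 1 ≤ e0)
    (hram : ∀ x : K0, x ≠ 0 → v2 (algebraMap K0 K2 x) = (p : ℤ) ^ 2 * v0 x)
    (a1 μ a2 : K0) (ha1 : a1 ≠ 0) (hμ0 : μ ≠ 0)
    (hwitt : ∀ y : K0, y ^ p - y ≠ a1)
    (hnd : ¬ ((p : ℤ) ∣ v0 a1))
    (hneg : v0 a1 < 0)
    (hbd : -((p : ℤ) * e0) < ((p : ℤ) ^ 2 - 1) * v0 a1)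
    (m : ℤ) (hm : m = -v0 μ) (hmpos : 0 < m)
    (hmu1 : (p : ℤ) ^ 2 * (p - 1) * m - (2 * p * (p - 1) + 1) * v0 a1 < (p : ℤ) ^ 2 * e0)
    (hmu2 : -(((p : ℤ) ^ 2 - 1) * v0 a1) < (p : ℤ) ^ 2 * m)
    (ha2 : a2 = μ ^ p * a1)
    (x1 x2 : K2)
    (hx1 : x1 ^ p - x1 = algebraMap K0 K2 a1)
    (hx2 : x2 ^ p - x2 = algebraMap K0 K2 a2 +
      (x1 ^ p + (algebraMap K0 K2 a1) ^ p - (x1 + algebraMap K0 K2 a1) ^ p) / (p : K2))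
    (hgen : Algebra.adjoin K0 {x1, x2} = ⊤)
    (b1 b2 : ℤ) (hb1 : b1 = -v0 a1) (hb2 : b2 = (p : ℤ) ^ 2 * m + b1) :
    x2 ≠ 0 ∧
    v2 x2 = min (-(((p : ℤ) ^ 2 - p + 1) * b1)) (-((p : ℤ) * b1) - (p : ℤ) ^ 2 * m) ∧
    min (-(((p : ℤ) ^ 2 - p + 1) * b1)) (-((p : ℤ) * b1) - (p : ℤ) ^ 2 * m) =
      -(((p : ℤ) - 1) * b1) - b2 := by
  have hp2 : 2 ≤ p := hp.two_le
  have hpz : (2 : ℤ) ≤ p := by exact_mod_cast hp2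
  have hb1pos : 0 < b1 := by omega
  have hv0a1 : v0 a1 = -b1 := by omega
  have hv0μ : v0 μ = -m := by omega
  rw [hv0a1] at hmu2
  set A1 := algebraMap K0 K2 a1 with hA1
  have hA1ne : A1 ≠ 0 := by simpa [hA1] using ha1
  have hvA1 : v2 A1 = -((p : ℤ) ^ 2 * b1) := by
    rw [hA1, hram _ ha1, hv0a1]
    ring
  obtain ⟨hx1ne, hvx1⟩ :=
    hv2.ne_zero_and_mul_map_of_pow_sub_self hp2 hA1ne (by rw [hvA1]; nlinarith) hx1
  have hvx1 : v2 x1 = -((p : ℤ) * b1) := by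
    apply mul_left_cancel₀ (show (p : ℤ) ≠ 0 by omega)
    rw [hvx1, hvA1]
    ring
  have ha2ne : a2 ≠ 0 := by
    rw [ha2]
    exact mul_ne_zero (pow_ne_zero p hμ0) ha1
  have hA2ne : algebraMap K0 K2 a2 ≠ 0 := by simpa using ha2ne
  have hvA2 : v2 (algebraMap K0 K2 a2) = (p : ℤ) * (-((p : ℤ) * b1) - (p : ℤ) ^ 2 * m) := by
    rw [hram _ ha2ne, ha2, hv0.map_mul _ _ (pow_ne_zero p hμ0) ha1, hv0.map_pow hμ0, hv0a1, hv0μ]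
    ring
  have hD : IsDiscVal.LowerBound v2 (v2 (algebraMap K0 K2 a2) + 1)
      ((x1 ^ p + A1 ^ p - (x1 + A1) ^ p) / (p : K2)) := by
    rw [witt_div_eq_neg_sum hp]
    refine IsDiscVal.LowerBound.neg hv2 (hv2.lowerBound_sum _ _ fun k hk => ?_)
    obtain ⟨hk0, hkp⟩ := Finset.mem_Ioo.mp hk
    have hterm := IsDiscVal.LowerBound.mul hv2
      (IsDiscVal.LowerBound.mul hv2 (fun _ => (hv2.map_pow hx1ne k).ge)
        (fun _ => (hv2.map_pow hA1ne (p - k)).ge))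
      (hv2.lowerBound_natCast (p.choose k / p))
    refine hterm.mono ?_
    rw [hvA2, hvx1, hvA1, Nat.cast_sub hkp.le]
    have hlarge : (p : ℤ) * (((p : ℤ) ^ 2 - 1) * b1 + 1) ≤ p * ((p : ℤ) ^ 2 * m) :=
      mul_le_mul_of_nonneg_left (by linarith) (by omega)
    have hgap : 0 ≤ (p : ℤ) * ((p : ℤ) - 1) * b1 * (1 + k) :=
      mul_nonneg (mul_nonneg (mul_nonneg (by omega) (by omega)) hb1pos.le) (by positivity)
    linarith
  obtain ⟨hRne, hvR⟩ := hv2.add_ne_zero_and_map_add hA2ne hD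
  obtain ⟨hx2ne, hvx2⟩ := hv2.ne_zero_and_mul_map_of_pow_sub_self hp2 hRne
    (by rw [hvR, hvA2]; exact mul_neg_of_pos_of_neg (by omega) (by nlinarith)) hx2
  rw [hvR, hvA2] at hvx2
  have hmin : min (-(((p : ℤ) ^ 2 - p + 1) * b1)) (-((p : ℤ) * b1) - (p : ℤ) ^ 2 * m) =
      -((p : ℤ) * b1) - (p : ℤ) ^ 2 * m := min_eq_right (by nlinarith)
  rw [hmin]
  refine ⟨hx2ne, mul_left_cancel₀ (by omega) hvx2, ?_⟩
  rw [hb2]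
  ring
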